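/- Let X be a smooth irreducible complex affine variety, f, g ∈ 𝒪(X) regular functions such that the zero loci V(f) and V(f,g) in X are smooth of codimension 1 and 2 respectively. Then for every integer m ≥ 2, the affine variety W = {(x,t) ∈ X × 𝔸¹ | t^m·g(x) = f(x)} is smooth of the same dimension as X. -/

import Mathlib

open Polynomial

/-!
Étale coordinates show that the rank of `Ω` of a smooth algebra over a field is at most its Krull
dimension, with equality for domains. The codimension hypotheses therefore say that `df` along
`V(f)`, and `df, dg` along `V(f, g)`, are linearly independent in the fibres of the cotangent
module of `X`, so that derivations of `A` can be prescribed on `f` (and `g`) at a closed point.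

By the Jacobian criterion `W` is smooth if at each of its closed points some derivation of `A[t]`
does not kill `s = t ^ m * g - f`. Where `t = 0` or `g = 0` one extends a derivation of `A` with
`f ↦ 1`, respectively `f ↦ 1, g ↦ 0`; elsewhere `∂s/∂t = m * t ^ (m - 1) * g` is invertible.

For the dimension, `s` is a nonzerodivisor of `A[t]`, which bounds `dim W` from above, and `t` is a
nonzerodivisor on `W` that cuts out `V(f)`, which bounds it from below.
-/

open TensorProduct KaehlerDifferential

section Dimension

variable {B C : Type*} [CommRing B] [CommRing C] [IsDomain C] [Algebra B C] [FaithfulSMul B C]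

theorem ringKrullDim_eq_of_isIntegral [Algebra.IsIntegral B C] :
    ringKrullDim C = ringKrullDim B := by
  apply le_antisymm
  · exact Order.krullDim_le_of_strictMono (PrimeSpectrum.comap (algebraMap B C))
      fun _ _ ↦ Ideal.IsIntegral.comap_lt_comap
  · refine iSup_le fun l ↦ ?_
    have hker : RingHom.ker (algebraMap B C) = ⊥ :=
      (RingHom.injective_iff_ker_eq_bot _).1 (FaithfulSMul.algebraMap_injective B C)
    obtain ⟨Q, _, hQ⟩ := Ideal.exists_ideal_over_prime_of_isIntegral_of_isDomain (S := C)
      l.head.asIdeal (by simp [hker])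
    have : Q.LiesOver l.head.asIdeal := ⟨hQ.symm⟩
    obtain ⟨L, hL, -⟩ := Ideal.exists_ltSeries_of_hasGoingUp l Q
    exact hL ▸ le_iSup (fun L : LTSeries (PrimeSpectrum C) ↦ (L.length : WithBot ℕ∞)) L

variable [IsDomain B]

theorem isAlgebraic_of_quasiFinite [Algebra.QuasiFinite B C] : Algebra.IsAlgebraic B C := by
  let := FractionRing.liftAlgebra B (FractionRing C)
  have : Algebra.QuasiFinite (FractionRing B) (FractionRing C) :=
    .of_restrictScalars B (FractionRing B) (FractionRing C)
  have : Module.Finite (FractionRing B) (FractionRing C) := .of_quasiFinite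
  have : Algebra.IsAlgebraic B (FractionRing C) :=
    (IsFractionRing.comap_isAlgebraic_iff (K := FractionRing B)).2 inferInstance
  exact (IsFractionRing.isAlgebraic_iff' B C (FractionRing C)).2 inferInstance

variable (k : Type*) [Field k] [Algebra k B] [Algebra k C] [IsScalarTower k B C]

theorem toNat_trdeg_eq_of_isAlgebraic [Algebra.IsAlgebraic B C] :
    (Algebra.trdeg k C).toNat = (Algebra.trdeg k B).toNat := by
  have h := lift_trdeg_add_eq k B C
  simpa [trdeg_eq_zero] using congrArg Cardinal.toNat h.symm

theorem ringKrullDim_eq_trdeg [Algebra.FiniteType k B] :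
    ringKrullDim B = (Algebra.trdeg k B).toNat := by
  obtain ⟨n, φ, hφ, hfin⟩ := exists_finite_inj_algHom_of_fg k B
  algebraize [φ.toRingHom]
  have : Module.Finite (MvPolynomial (Fin n) k) B := hfin
  have : FaithfulSMul (MvPolynomial (Fin n) k) B :=
    (faithfulSMul_iff_algebraMap_injective _ _).2 hφ
  rw [ringKrullDim_eq_of_isIntegral (B := MvPolynomial (Fin n) k),
    toNat_trdeg_eq_of_isAlgebraic k (B := MvPolynomial (Fin n) k),
    MvPolynomial.ringKrullDim_of_isNoetherianRing]
  simp [MvPolynomial.trdeg_of_isDomain]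

theorem finiteRingKrullDim_of_finiteType [Algebra.FiniteType k B] : FiniteRingKrullDim B := by
  rw [finiteRingKrullDim_iff_ne_bot_and_top, ringKrullDim_eq_trdeg k]
  exact ⟨WithBot.natCast_ne_bot _, WithBot.coe_injective.ne (ENat.natCast_ne_top _)⟩

theorem ringKrullDim_eq_of_quasiFinite [Algebra.FiniteType k B] [Algebra.FiniteType k C]
    [Algebra.QuasiFinite B C] : ringKrullDim C = ringKrullDim B := by
  have := isAlgebraic_of_quasiFinite (B := B) (C := C)
  rw [ringKrullDim_eq_trdeg k, ringKrullDim_eq_trdeg k, toNat_trdeg_eq_of_isAlgebraic k (B := B)]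

end Dimension

section Rank

theorem rankAtStalk_kaehlerDifferential_comap_of_formallyEtale (k : Type*) {R S : Type*}
    [CommRing k] [CommRing R] [CommRing S] [Algebra k R] [Algebra k S] [Algebra R S]
    [IsScalarTower k R S] [Module.Flat R Ω[R⁄k]] [Module.Finite R Ω[R⁄k]]
    [Algebra.FormallyEtale R S] (p : PrimeSpectrum S) :
    Module.rankAtStalk Ω[R⁄k] (p.comap (algebraMap R S)) = Module.rankAtStalk Ω[S⁄k] p := by
  rw [← Module.rankAtStalk_baseChange,
    Module.rankAtStalk_eq_of_equiv (tensorKaehlerEquivOfFormallyEtale k R S)]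

theorem rankAtStalk_kaehlerDifferential_of_formallyEtale_mvPolynomial (k : Type*) [CommRing k]
    {S : Type*} [CommRing S] [Algebra k S] (n : ℕ) [Algebra (MvPolynomial (Fin n) k) S]
    [IsScalarTower k (MvPolynomial (Fin n) k) S]
    [Algebra.FormallyEtale (MvPolynomial (Fin n) k) S] (p : PrimeSpectrum S) :
    Module.rankAtStalk Ω[S⁄k] p = n := by
  have := p.nontrivial
  have := (algebraMap (MvPolynomial (Fin n) k) S).domain_nontrivial
  let b := mvPolynomialBasis k (Fin n)
  have := Module.Free.of_basis b
  have : Module.Finite (MvPolynomial (Fin n) k) Ω[MvPolynomial (Fin n) k⁄k] := .of_basis b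
  rw [← rankAtStalk_kaehlerDifferential_comap_of_formallyEtale k (R := MvPolynomial (Fin n) k),
    Module.rankAtStalk_eq_finrank_of_free, Module.finrank_eq_card_basis b]
  simp

theorem faithfulSMul_quotient_of_mem_minimalPrimes {P S : Type*} [CommRing P] [IsDomain P]
    [CommRing S] [Algebra P S] [Module.Flat P S] {q : Ideal S} (hq : q ∈ minimalPrimes S) :
    FaithfulSMul P (S ⧸ q) := by
  rw [faithfulSMul_iff_algebraMap_injective, injective_iff_map_eq_zero]
  intro x hx
  by_contra hx0
  have hreg : IsSMulRegular S (algebraMap P S x) := .of_flat fun _ _ h ↦ mul_left_cancel₀ hx0 h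
  have hann : q ∈ (Module.annihilator S S).minimalPrimes := by
    rwa [Module.annihilator_eq_bot.2 inferInstance]
  exact hreg.notMem_of_mem_minimalPrimes hann (Ideal.Quotient.eq_zero_iff_mem.1 hx)

variable (k : Type*) [Field k]

theorem ringKrullDim_quotient_of_mem_minimalPrimes_of_etale_mvPolynomial {S : Type*} [CommRing S]
    [Algebra k S] (n : ℕ) [Algebra (MvPolynomial (Fin n) k) S]
    [IsScalarTower k (MvPolynomial (Fin n) k) S] [Algebra.Etale (MvPolynomial (Fin n) k) S]
    {q : Ideal S} (hq : q ∈ minimalPrimes S) : ringKrullDim (S ⧸ q) = n := by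
  have := hq.isPrime
  have : Algebra.FiniteType k S := .trans (S := MvPolynomial (Fin n) k) inferInstance inferInstance
  have : Module.Flat (MvPolynomial (Fin n) k) S := Algebra.Smooth.flat (MvPolynomial (Fin n) k) S
  have := faithfulSMul_quotient_of_mem_minimalPrimes (P := MvPolynomial (Fin n) k) hq
  rw [ringKrullDim_eq_of_quasiFinite k (B := MvPolynomial (Fin n) k),
    MvPolynomial.ringKrullDim_of_isNoetherianRing]
  simp

variable {R : Type*} [CommRing R] [Algebra k R]

theorem ringKrullDim_quotient_under_away [Algebra.FiniteType k R] (f : R)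
    (q : Ideal (Localization.Away f)) [q.IsPrime] :
    ringKrullDim (R ⧸ q.under R) = ringKrullDim (Localization.Away f ⧸ q) := by
  have : Algebra.QuasiFinite (R ⧸ q.under R) (Localization.Away f ⧸ q) := .of_restrictScalars R _ _
  have : Algebra.FiniteType R (Localization.Away f) :=
    IsLocalization.finiteType_of_monoid_fg (.powers f) _
  have : Algebra.FiniteType k (Localization.Away f) := .trans (S := R) inferInstance inferInstance
  exact (ringKrullDim_eq_of_quasiFinite k).symm

theorem exists_mem_minimalPrimes_ringKrullDim_quotient_eq_rankAtStalk [Algebra.Smooth k R]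
    (p : PrimeSpectrum R) :
    ∃ q ∈ minimalPrimes R, ringKrullDim (R ⧸ q) = Module.rankAtStalk Ω[R⁄k] p := by
  obtain ⟨f, hf, n, _, _, _⟩ :=
    Algebra.IsSmoothAt.exists_isStandardEtale_mvPolynomial (R := k) (p := p.asIdeal)
  obtain ⟨p', rfl⟩ : p ∈ Set.range (PrimeSpectrum.comap (algebraMap R (Localization.Away f))) := by
    rwa [PrimeSpectrum.localization_away_comap_range _ f]
  have := p'.nontrivial
  obtain ⟨q, hq⟩ := Ideal.nonempty_minimalPrimes (bot_ne_top (α := Ideal (Localization.Away f)))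
  have := hq.isPrime
  have := Algebra.FormallyEtale.of_isLocalization (Rₘ := Localization.Away f) (.powers f)
  have hq' : q.under R ∈ minimalPrimes R := by
    change q ∈ Ideal.under R ⁻¹' (⊥ : Ideal R).minimalPrimes
    rwa [← IsLocalization.minimalPrimes_map (.powers f) (Localization.Away f), Ideal.map_bot]
  refine ⟨q.under R, hq', ?_⟩
  rw [ringKrullDim_quotient_under_away k,
    ringKrullDim_quotient_of_mem_minimalPrimes_of_etale_mvPolynomial k n hq,
    rankAtStalk_kaehlerDifferential_comap_of_formallyEtale,
    rankAtStalk_kaehlerDifferential_of_formallyEtale_mvPolynomial k n]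

theorem rankAtStalk_kaehlerDifferential_le_ringKrullDim [Algebra.Smooth k R]
    (p : PrimeSpectrum R) : Module.rankAtStalk Ω[R⁄k] p ≤ ringKrullDim R := by
  obtain ⟨q, -, hq⟩ := exists_mem_minimalPrimes_ringKrullDim_quotient_eq_rankAtStalk k p
  exact hq ▸ ringKrullDim_quotient_le q

theorem rankAtStalk_kaehlerDifferential_eq_ringKrullDim [IsDomain R] [Algebra.Smooth k R]
    (p : PrimeSpectrum R) : Module.rankAtStalk Ω[R⁄k] p = ringKrullDim R := by
  obtain ⟨q, hq, hdim⟩ := exists_mem_minimalPrimes_ringKrullDim_quotient_eq_rankAtStalk k p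
  obtain rfl : q = ⊥ := by simpa [IsDomain.minimalPrimes_eq_singleton_bot] using hq
  rw [← hdim, ringKrullDim_eq_of_ringEquiv (RingEquiv.quotientBot R)]

end Rank

section ConormalSequence

variable (k : Type*) {A B ι : Type*} [CommRing k] [CommRing A] [CommRing B] [Algebra k A]
  [Algebra A B] {s : ι → A}

theorem one_tmul_D_mem_span (hs : ∀ i, algebraMap A B (s i) = 0) {a : A}
    (ha : a ∈ Ideal.span (Set.range s)) :
    1 ⊗ₜ D k A a ∈ Submodule.span B (Set.range fun i ↦ (1 : B) ⊗ₜ[A] D k A (s i)) := by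
  have hspan : Ideal.span (Set.range s) ≤ RingHom.ker (algebraMap A B) :=
    Ideal.span_le.2 (Set.range_subset_iff.2 hs)
  induction ha using Submodule.span_induction with
  | mem _ h => obtain ⟨i, rfl⟩ := h; exact Submodule.subset_span ⟨i, rfl⟩
  | zero => simp
  | add a b _ _ ha hb => simpa [tmul_add] using add_mem ha hb
  | smul c a ha ih =>
    have ha0 : algebraMap A B a = 0 := hspan ha
    have : (1 : B) ⊗ₜ[A] D k A (c • a) = algebraMap A B c • ((1 : B) ⊗ₜ[A] D k A a) := by
      rw [smul_eq_mul, Derivation.leibniz, tmul_add, ← smul_tmul a,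
        ← Algebra.algebraMap_eq_smul_one, ha0, zero_tmul, add_zero, tmul_smul, algebraMap_smul]
    exact this ▸ Submodule.smul_mem _ _ ih

theorem ker_mapBaseChange_eq_span [Algebra k B] [IsScalarTower k A B]
    (hAB : Function.Surjective (algebraMap A B))
    (hs : RingHom.ker (algebraMap A B) = Ideal.span (Set.range s)) :
    LinearMap.ker (mapBaseChange k A B) =
      Submodule.span B (Set.range fun i ↦ 1 ⊗ₜ[A] D k A (s i)) := by
  have hs0 (i : ι) : algebraMap A B (s i) = 0 := by
    rw [← RingHom.mem_ker, hs]
    exact Ideal.subset_span ⟨i, rfl⟩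
  apply le_antisymm
  · intro x hx
    rw [← Submodule.restrictScalars_mem A, ← range_kerCotangentToTensor k A B hAB] at hx
    obtain ⟨y, rfl⟩ := hx
    obtain ⟨⟨a, ha⟩, rfl⟩ := Ideal.toCotangent_surjective _ y
    exact one_tmul_D_mem_span k hs0 (hs ▸ ha)
  · rw [Submodule.span_le]
    rintro _ ⟨i, rfl⟩
    simp [hs0]

end ConormalSequence

section LinearAlgebra

variable {B M N ι : Type*} [CommRing B] [AddCommGroup M] [AddCommGroup N] [Module B M] [Module B N]
  {π : M →ₗ[B] N} {w : ι → M}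

theorem ker_baseChange_eq_span (K : Type*) [CommRing K] [Algebra B K]
    (hπ : Function.Surjective π) (hw : LinearMap.ker π = Submodule.span B (Set.range w)) :
    LinearMap.ker (π.baseChange K) = Submodule.span K (Set.range fun i ↦ 1 ⊗ₜ[B] w i) := by
  have hexact := lTensor_exact K π.exact_subtype_ker_map hπ
  calc
    LinearMap.ker (π.baseChange K) = (LinearMap.ker π).baseChange K :=
      SetLike.ext fun x ↦ SetLike.ext_iff.1 hexact.linearMap_ker_eq x
    _ = _ := by
      rw [hw, Submodule.baseChange_span, ← Set.range_comp]
      rfl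

theorem linearIndependent_one_tmul [Module.Finite B M] {K : Type*} [Field K] [Algebra B K]
    [Fintype ι] (hπ : Function.Surjective π)
    (hw : LinearMap.ker π = Submodule.span B (Set.range w))
    (hdim : Module.finrank K (K ⊗[B] N) + Fintype.card ι ≤ Module.finrank K (K ⊗[B] M)) :
    LinearIndependent K fun i ↦ (1 : K) ⊗ₜ[B] w i := by
  have hrange : LinearMap.range (π.baseChange K) = ⊤ :=
    LinearMap.range_eq_top.2 (LinearMap.lTensor_surjective K hπ)
  rw [linearIndependent_iff_card_le_finrank_span, Set.finrank, ← ker_baseChange_eq_span K hπ hw]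
  have := LinearMap.finrank_range_add_finrank_ker (π.baseChange K)
  rw [hrange, finrank_top] at this
  omega

theorem exists_dual_forall_apply_eq {K V ι : Type*} [Field K] [AddCommGroup V] [Module K V]
    {w : ι → V} (hw : LinearIndependent K w) (v : ι → K) :
    ∃ φ : Module.Dual K V, ∀ i, φ (w i) = v i := by
  obtain ⟨φ, hφ⟩ := LinearMap.exists_leftInverse_of_injective _ (LinearMap.ker_eq_bot.2 hw)
  refine ⟨Finsupp.linearCombination K v ∘ₗ φ, fun i ↦ ?_⟩
  have hi : φ (w i) = Finsupp.single i 1 := by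
    simpa using LinearMap.congr_fun hφ (Finsupp.single i 1)
  simp [hi]

theorem finrank_baseChange_eq_rankAtStalk (B : Type*) [CommRing B] (K : Type*) [Field K]
    [Algebra B K] (M : Type*) [AddCommGroup M] [Module B M] [Module.Finite B M] [Module.Flat B M] :
    Module.finrank K (K ⊗[B] M) =
      Module.rankAtStalk M ((⊥ : PrimeSpectrum K).comap (algebraMap B K)) := by
  rw [← Module.rankAtStalk_baseChange, Module.rankAtStalk_eq_finrank_of_free]
  rfl

end LinearAlgebra

section Derivations

theorem exists_derivation_algebraMap_eq_of_linearIndependent (k : Type*) {A ι : Type*} [CommRing k]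
    [CommRing A] [Algebra k A] [Algebra.FormallySmooth k A] (K : Type*) [Field K] [Algebra A K]
    (hK : Function.Surjective (algebraMap A K)) {s : ι → A}
    (hs : LinearIndependent K fun i ↦ (1 : K) ⊗ₜ[A] D k A (s i)) (v : ι → K) :
    ∃ E : Derivation k A A, ∀ i, algebraMap A K (E (s i)) = v i := by
  obtain ⟨φ, hφ⟩ := exists_dual_forall_apply_eq hs v
  obtain ⟨χ, hχ⟩ := Module.projective_lifting_property (Algebra.linearMap A K)
    (φ.restrictScalars A ∘ₗ TensorProduct.mk A K Ω[A⁄k] 1) hK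
  exact ⟨χ.compDer (D k A), fun i ↦ (LinearMap.congr_fun hχ (D k A (s i))).trans (hφ i)⟩

variable (k : Type*) [Field k] {A B ι : Type*} [CommRing A] [IsDomain A] [Algebra k A]
  [Algebra.Smooth k A] [CommRing B] [Algebra A B] [Algebra k B] [IsScalarTower k A B]
  [Algebra.Smooth k B] [Fintype ι] {s : ι → A}

theorem linearIndependent_one_tmul_D (hAB : Function.Surjective (algebraMap A B))
    (hs : RingHom.ker (algebraMap A B) = Ideal.span (Set.range s))
    (hdim : ringKrullDim B + Fintype.card ι = ringKrullDim A)
    (K : Type*) [Field K] [Algebra A K] [Algebra B K] [IsScalarTower A B K] :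
    LinearIndependent K fun i ↦ (1 : K) ⊗ₜ[A] D k A (s i) := by
  let e := AlgebraTensorModule.cancelBaseChange A B K K Ω[A⁄k]
  have hrank : Module.finrank K (K ⊗[B] Ω[B⁄k]) + Fintype.card ι ≤
      Module.finrank K (K ⊗[B] (B ⊗[A] Ω[A⁄k])) := by
    rw [e.finrank_eq, finrank_baseChange_eq_rankAtStalk, finrank_baseChange_eq_rankAtStalk]
    suffices h : (Module.rankAtStalk Ω[B⁄k] ((⊥ : PrimeSpectrum K).comap (algebraMap B K)) +
        Fintype.card ι : WithBot ℕ∞) ≤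
        Module.rankAtStalk Ω[A⁄k] ((⊥ : PrimeSpectrum K).comap (algebraMap A K)) by
      exact_mod_cast h
    rw [rankAtStalk_kaehlerDifferential_eq_ringKrullDim k (R := A), ← hdim]
    gcongr
    exact rankAtStalk_kaehlerDifferential_le_ringKrullDim k _
  have hind := linearIndependent_one_tmul (mapBaseChange_surjective k A B hAB)
    (ker_mapBaseChange_eq_span k hAB hs) hrank
  simpa [e, Function.comp_def] using hind.map' e.toLinearMap e.ker

theorem exists_derivation_algebraMap_eq (hAB : Function.Surjective (algebraMap A B))
    (hs : RingHom.ker (algebraMap A B) = Ideal.span (Set.range s))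
    (hdim : ringKrullDim B + Fintype.card ι = ringKrullDim A)
    (K : Type*) [Field K] [Algebra A K] [Algebra B K] [IsScalarTower A B K]
    (hK : Function.Surjective (algebraMap A K)) (v : ι → K) :
    ∃ E : Derivation k A A, ∀ i, algebraMap A K (E (s i)) = v i :=
  exists_derivation_algebraMap_eq_of_linearIndependent k K hK
    (linearIndependent_one_tmul_D k hAB hs hdim K) v

theorem exists_derivation_sub_mem {I : Ideal A} (hI : Ideal.span (Set.range s) = I)
    [Algebra.Smooth k (A ⧸ I)] (hdim : ringKrullDim (A ⧸ I) + Fintype.card ι = ringKrullDim A)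
    {p : Ideal A} [p.IsMaximal] (hp : I ≤ p) (v : ι → A) :
    ∃ E : Derivation k A A, ∀ i, E (s i) - v i ∈ p := by
  let : Field (A ⧸ p) := Ideal.Quotient.field p
  let : Algebra (A ⧸ I) (A ⧸ p) := (Ideal.Quotient.factor hp).toAlgebra
  have : IsScalarTower A (A ⧸ I) (A ⧸ p) := .of_algebraMap_eq fun _ ↦ rfl
  obtain ⟨E, hE⟩ := exists_derivation_algebraMap_eq k (B := A ⧸ I) Ideal.Quotient.mk_surjective
    (Ideal.mk_ker.trans hI.symm) hdim (A ⧸ p) Ideal.Quotient.mk_surjective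
    fun i ↦ Ideal.Quotient.mk p (v i)
  exact ⟨E, fun i ↦ Ideal.Quotient.eq.1 (hE i)⟩

end Derivations

section JacobianCriterion

variable {R P : Type*} [CommRing R] [CommRing P] [Algebra R P] {s : P}

/- Modulo `s ^ 2`, `x ↦ D x * s` restricts to the identity on `(s)`, so it splits the conormal
sequence of `P → B`. -/
theorem formallySmooth_of_derivation {B : Type*} [CommRing B] [Algebra P B] [Algebra R B]
    [IsScalarTower R P B] [Algebra.FormallySmooth R P]
    (hPB : Function.Surjective (algebraMap P B)) {c : P}
    (hs : RingHom.ker (algebraMap P B) = Ideal.span {s}) (D : Derivation R P P)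
    (hD : D s + c * s = 1) : Algebra.FormallySmooth R B := by
  let E : Algebra.Extension R B :=
    { Ring := P, σ := _, algebraMap_σ := Function.surjInv_eq hPB }
  have hE : E.ker = Ideal.span {s} := hs
  have hsE : s ∈ E.ker := hE ▸ Ideal.mem_span_singleton_self s
  let σ : Ω[P⁄R] →ₗ[P] E.Cotangent :=
    LinearMap.toSpanSingleton P E.Cotangent (.mk ⟨s, hsE⟩) ∘ₗ D.liftKaehlerDifferential
  refine E.formallySmooth_iff_split_injection.2 ⟨σ.liftBaseChange B, LinearMap.ext fun x ↦ ?_⟩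
  obtain ⟨⟨x, hx⟩, rfl⟩ := Algebra.Extension.Cotangent.mk_surjective x
  obtain ⟨a, rfl⟩ := Ideal.mem_span_singleton'.1 (hE ▸ hx)
  have hσ : σ.liftBaseChange B (E.cotangentComplex (.mk ⟨a * s, hx⟩)) =
      .mk (D (a * s) • (⟨s, hsE⟩ : E.ker)) := by
    calc
      _ = σ.liftBaseChange B (1 ⊗ₜ KaehlerDifferential.D R P (a * s)) := rfl
      _ = D.liftKaehlerDifferential (KaehlerDifferential.D R P (a * s)) •
          Algebra.Extension.Cotangent.mk (⟨s, hsE⟩ : E.ker) := by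
        rw [LinearMap.liftBaseChange_tmul, one_smul]
        rfl
      _ = _ := by rw [D.liftKaehlerDifferential_comp_D]; exact (map_smul ..).symm
  rw [LinearMap.comp_apply, hσ, LinearMap.id_apply, ← sub_eq_zero, ← map_sub,
    Algebra.Extension.Cotangent.mk_eq_zero_iff]
  have hsq : D (a * s) * s - a * s = (D a - a * c) * s ^ 2 := by
    rw [D.leibniz, smul_eq_mul, smul_eq_mul]
    linear_combination a * s * hD
  change D (a * s) * s - a * s ∈ E.ker ^ 2
  exact hsq ▸ Ideal.mul_mem_left _ _ (Ideal.pow_mem_pow hsE 2)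

theorem exists_derivation_add_mul_eq_one
    (h : ∀ n : Ideal P, n.IsMaximal → s ∈ n → ∃ D : Derivation R P P, D s ∉ n) :
    ∃ (D : Derivation R P P) (c : P), D s + c * s = 1 := by
  let ev : Derivation R P P →ₗ[P] P :=
    { toFun := fun D ↦ D s, map_add' := fun _ _ ↦ rfl, map_smul' := fun _ _ ↦ rfl }
  have htop : LinearMap.range ev ⊔ Ideal.span {s} = (⊤ : Ideal P) := by
    by_contra hne
    obtain ⟨n, hn, hle⟩ := Ideal.exists_le_maximal _ hne
    obtain ⟨D, hD⟩ := h n hn (hle (Ideal.mem_sup_right (Ideal.mem_span_singleton_self s)))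
    exact hD (hle (Ideal.mem_sup_left ⟨D, rfl⟩))
  obtain ⟨_, ⟨D, rfl⟩, b, hb, hD⟩ := Submodule.mem_sup.1 ((Ideal.eq_top_iff_one _).1 htop)
  obtain ⟨c, rfl⟩ := Ideal.mem_span_singleton'.1 hb
  exact ⟨D, c, hD⟩

theorem smooth_quotient_span_singleton [Algebra.Smooth R P]
    (h : ∀ n : Ideal P, n.IsMaximal → s ∈ n → ∃ D : Derivation R P P, D s ∉ n) :
    Algebra.Smooth R (P ⧸ Ideal.span {s}) := by
  obtain ⟨D, c, hD⟩ := exists_derivation_add_mul_eq_one h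
  exact ⟨formallySmooth_of_derivation Ideal.Quotient.mk_surjective Ideal.mk_ker D hD,
    .quotient (Submodule.fg_span_singleton s)⟩

end JacobianCriterion

section PolynomialDerivations

variable {k A : Type*} [CommRing A] {m : ℕ} {n : Ideal A[X]}

theorem exists_derivation_polynomial [CommRing k] [Algebra k A] (E : Derivation k A A) :
    ∃ E' : Derivation k A[X] A[X], E' X = 0 ∧ ∀ a, E' (C a) = C (E a) := by
  refine ⟨PolynomialModule.equivPolynomialSelf.compDer E.mapCoeffs, ?_, fun a ↦ ?_⟩
  · ext i
    change E (coeff X i) = 0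
    simp [coeff_X, apply_ite E]
  · ext i
    change E (coeff (C a) i) = _
    simp [coeff_C, apply_ite E]

theorem exists_derivation_notMem_of_derivation [CommRing k] [Algebra k A] {f g : A}
    (hn : n.comap C ≠ ⊤) (E : Derivation k A A) (hf : E f - 1 ∈ n.comap C)
    (hg : X ^ m * C (E g) ∈ n) :
    ∃ D : Derivation k A[X] A[X], D (X ^ m * C g - C f) ∉ n := by
  obtain ⟨D, hX, hC⟩ := exists_derivation_polynomial E
  have hD : D (X ^ m * C g - C f) = X ^ m * C (E g) - C (E f) := by
    simp [D.leibniz_pow, hX, hC]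
  have hf' : C (E f) - 1 ∈ n := by simpa using hf
  refine ⟨D, fun h ↦ (Ideal.ne_top_iff_one (n.comap C)).1 hn ?_⟩
  rw [hD] at h
  simpa using n.sub_mem (n.sub_mem hg h) hf'

variable [Field k] [Algebra k A]

theorem exists_derivation_notMem_of_X_notMem (f : A) {g : A} [hn : n.IsPrime]
    (hm : (m : k) ≠ 0) (hX : X ∉ n) (hg : C g ∉ n) :
    ∃ D : Derivation k A[X] A[X], D (X ^ m * C g - C f) ∉ n := by
  refine ⟨derivative'.restrictScalars k, ?_⟩
  have hunit : IsUnit (C (m : A)) := by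
    simpa using ((IsUnit.mk0 _ hm).map (algebraMap k A)).map C
  have hD : derivative (X ^ m * C g - C f) = C (m : A) * X ^ (m - 1) * C g := by
    rw [derivative_sub, derivative_mul, derivative_X_pow, derivative_C, derivative_C]
    ring
  change derivative (X ^ m * C g - C f) ∉ n
  rw [hD, hn.mul_mem_iff_mem_or_mem, hn.mul_mem_iff_mem_or_mem]
  rintro ((h | h) | h)
  · exact hn.ne_top (n.eq_top_of_isUnit_mem h hunit)
  · exact hX (hn.mem_of_pow_mem _ h)
  · exact hg h

variable [IsDomain A] [Algebra.Smooth k A] {f g : A}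

theorem exists_derivation_notMem_of_X_mem [Algebra.Smooth k (A ⧸ Ideal.span {f})]
    (hdim : ringKrullDim (A ⧸ Ideal.span {f}) + 1 = ringKrullDim A)
    [hn : (n.comap C).IsMaximal] (hm : m ≠ 0) (hX : X ∈ n) (hf : C f ∈ n) :
    ∃ D : Derivation k A[X] A[X], D (X ^ m * C g - C f) ∉ n := by
  obtain ⟨E, hE⟩ := exists_derivation_sub_mem k (s := ![f]) (I := Ideal.span {f}) (by simp)
    (by simpa using hdim) (p := n.comap C) (by simpa [Ideal.span_singleton_le_iff_mem]) ![1]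
  exact exists_derivation_notMem_of_derivation hn.ne_top E (hE 0)
    (n.mul_mem_right _ (n.pow_mem_of_mem hX m (Nat.pos_of_ne_zero hm)))

theorem exists_derivation_notMem_of_C_mem [Algebra.Smooth k (A ⧸ Ideal.span {f, g})]
    (hdim : ringKrullDim (A ⧸ Ideal.span {f, g}) + 2 = ringKrullDim A)
    [hn : (n.comap C).IsMaximal] (hf : C f ∈ n) (hg : C g ∈ n) :
    ∃ D : Derivation k A[X] A[X], D (X ^ m * C g - C f) ∉ n := by
  have hle : Ideal.span {f, g} ≤ n.comap C :=
    Ideal.span_le.2 (Set.insert_subset hf (Set.singleton_subset_iff.2 hg))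
  obtain ⟨E, hE⟩ := exists_derivation_sub_mem k (s := ![f, g]) (I := Ideal.span {f, g})
    (by simp [Set.pair_comm]) (by simpa using hdim) hle ![1, 0]
  have hEg : E g ∈ n.comap C := by simpa using hE 1
  exact exists_derivation_notMem_of_derivation hn.ne_top E (hE 0) (n.mul_mem_left _ hEg)

end PolynomialDerivations

section HypersurfaceDimension

variable {A : Type*} [CommRing A] {p : A[X]}

theorem mem_nonZeroDivisors_of_coeff_zero_mem (hp : p.coeff 0 ∈ nonZeroDivisors A) :
    p ∈ nonZeroDivisors A[X] := by
  refine Polynomial.mem_nonZeroDivisors_iff.2 fun a ha ↦ ?_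
  have h0 : a * p.coeff 0 = 0 := by simpa using congrArg (coeff · 0) ha
  exact (mul_right_mem_nonZeroDivisors_eq_zero_iff hp).1 h0

theorem mk_X_mem_nonZeroDivisors (hp : p.coeff 0 ∈ nonZeroDivisors A) :
    Ideal.Quotient.mk (Ideal.span {p}) X ∈ nonZeroDivisors (A[X] ⧸ Ideal.span {p}) := by
  refine mem_nonZeroDivisors_iff_right.2 fun y hy ↦ ?_
  obtain ⟨y, rfl⟩ := Ideal.Quotient.mk_surjective y
  rw [← map_mul, Ideal.Quotient.eq_zero_iff_mem, Ideal.mem_span_singleton'] at hy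
  obtain ⟨q, hq⟩ := hy
  have hq0 : q.coeff 0 * p.coeff 0 = 0 := by simpa using congrArg (coeff · 0) hq
  obtain ⟨r, rfl⟩ := X_dvd_iff.2 ((mul_right_mem_nonZeroDivisors_eq_zero_iff hp).1 hq0)
  have hr : r * p = y := isRegular_X.left (by simpa [mul_assoc, mul_comm y] using hq)
  exact Ideal.Quotient.eq_zero_iff_mem.2 (Ideal.mem_span_singleton'.2 ⟨r, hr⟩)

theorem ringKrullDim_polynomial_quotient_le [IsNoetherianRing A] (hp : p ∈ nonZeroDivisors A[X]) :
    ringKrullDim (A[X] ⧸ Ideal.span {p}) ≤ ringKrullDim A := by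
  have h := ringKrullDim_quotient_succ_le_of_nonZeroDivisor hp
  rw [ringKrullDim_of_isNoetherianRing] at h
  exact ENat.WithBot.add_le_add_one_right_iff.1 h

theorem ringKrullDim_quotient_coeff_zero_add_one_le (hp : p.coeff 0 ∈ nonZeroDivisors A) :
    ringKrullDim (A ⧸ Ideal.span {p.coeff 0}) + 1 ≤ ringKrullDim (A[X] ⧸ Ideal.span {p}) := by
  let φ : A[X] ⧸ Ideal.span {p} →+* A ⧸ Ideal.span {p.coeff 0} :=
    Ideal.quotientMap _ constantCoeff (by simp)
  have hφ : Function.Surjective φ := Ideal.quotientMap_surjective constantCoeff_surjective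
  exact ringKrullDim_succ_le_of_surjective φ hφ (mk_X_mem_nonZeroDivisors hp) (by simp [φ])

theorem ringKrullDim_polynomial_quotient_eq [IsNoetherianRing A]
    (hp : p.coeff 0 ∈ nonZeroDivisors A)
    (hdim : ringKrullDim (A ⧸ Ideal.span {p.coeff 0}) + 1 = ringKrullDim A) :
    ringKrullDim (A[X] ⧸ Ideal.span {p}) = ringKrullDim A :=
  (ringKrullDim_polynomial_quotient_le (mem_nonZeroDivisors_of_coeff_zero_mem hp)).antisymm
    (hdim ▸ ringKrullDim_quotient_coeff_zero_add_one_le hp)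

theorem ne_zero_of_ringKrullDim_quotient_add_one_eq [FiniteRingKrullDim A] {f : A}
    (h : ringKrullDim (A ⧸ Ideal.span {f}) + 1 = ringKrullDim A) : f ≠ 0 := by
  rintro rfl
  rw [Ideal.span_singleton_zero, ringKrullDim_eq_of_ringEquiv (RingEquiv.quotientBot A)] at h
  obtain ⟨d, hd⟩ := WithBot.ne_bot_iff_exists.1 (ringKrullDim_ne_bot (R := A))
  obtain ⟨n, rfl⟩ := ENat.ne_top_iff_exists.1 fun hd' : d = ⊤ ↦
    ringKrullDim_ne_top (R := A) (by rw [← hd, hd']; rfl)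
  rw [← hd] at h
  norm_cast at h
  omega

end HypersurfaceDimension

section Hypersurface

variable {k A : Type*} [Field k] [CommRing A] [IsDomain A] [Algebra k A] [Algebra.Smooth k A]
  (f g : A) {m : ℕ}

theorem smooth_quotient_X_pow_mul_C_sub_C (hm : (m : k) ≠ 0)
    [Algebra.Smooth k (A ⧸ Ideal.span {f})]
    (hf_dim : ringKrullDim (A ⧸ Ideal.span {f}) + 1 = ringKrullDim A)
    [Algebra.Smooth k (A ⧸ Ideal.span {f, g})]
    (hfg_dim : ringKrullDim (A ⧸ Ideal.span {f, g}) + 2 = ringKrullDim A) :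
    Algebra.Smooth k (A[X] ⧸ Ideal.span {X ^ m * C g - C f}) := by
  have hm0 : m ≠ 0 := by rintro rfl; simp at hm
  have : Algebra.Smooth A A[X] := ⟨inferInstance, inferInstance⟩
  have : Algebra.Smooth k A[X] := .comp k A A[X]
  have : IsJacobsonRing A := isJacobsonRing_of_finiteType (A := k)
  refine smooth_quotient_span_singleton fun n _ hs ↦ ?_
  have : (n.comap C).IsMaximal := isMaximal_comap_C_of_isJacobsonRing n
  have hn : n.IsPrime := inferInstance
  by_cases hX : X ∈ n
  · have hf : C f ∈ n := by
      simpa using n.sub_mem (n.mul_mem_right (C g) (n.pow_mem_of_mem hX m (by omega))) hs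
    exact exists_derivation_notMem_of_X_mem hf_dim hm0 hX hf
  by_cases hg : C g ∈ n
  · have hf : C f ∈ n := by simpa using n.sub_mem (n.mul_mem_left (X ^ m) hg) hs
    exact exists_derivation_notMem_of_C_mem hfg_dim hf hg
  · exact exists_derivation_notMem_of_X_notMem f hm hX hg

theorem ringKrullDim_quotient_X_pow_mul_C_sub_C (hm : m ≠ 0) [IsNoetherianRing A]
    [FiniteRingKrullDim A] (hdim : ringKrullDim (A ⧸ Ideal.span {f}) + 1 = ringKrullDim A) :
    ringKrullDim (A[X] ⧸ Ideal.span {X ^ m * C g - C f}) = ringKrullDim A := by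
  have hf := ne_zero_of_ringKrullDim_quotient_add_one_eq hdim
  have h0 : (X ^ m * C g - C f).coeff 0 = -f := by simp [hm.symm, coeff_X_pow]
  apply ringKrullDim_polynomial_quotient_eq
  · rw [h0]
    exact mem_nonZeroDivisors_of_ne_zero (neg_ne_zero.2 hf)
  · rwa [h0, Ideal.span_singleton_neg]

theorem stmt14_general (hm : (m : k) ≠ 0) [Algebra.Smooth k (A ⧸ Ideal.span {f})]
    (hf_dim : ringKrullDim (A ⧸ Ideal.span {f}) + 1 = ringKrullDim A)
    [Algebra.Smooth k (A ⧸ Ideal.span {f, g})]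
    (hfg_dim : ringKrullDim (A ⧸ Ideal.span {f, g}) + 2 = ringKrullDim A) :
    Algebra.Smooth k (A[X] ⧸ Ideal.span {X ^ m * C g - C f}) ∧
      ringKrullDim (A[X] ⧸ Ideal.span {X ^ m * C g - C f}) = ringKrullDim A := by
  have : IsNoetherianRing A := Algebra.FiniteType.isNoetherianRing k A
  have : FiniteRingKrullDim A := finiteRingKrullDim_of_finiteType k
  refine ⟨smooth_quotient_X_pow_mul_C_sub_C f g hm hf_dim hfg_dim,
    ringKrullDim_quotient_X_pow_mul_C_sub_C f g ?_ hf_dim⟩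
  rintro rfl
  simp at hm

end Hypersurface

/-- Let `X = Spec A` be a smooth irreducible complex affine variety, and let
`f, g ∈ 𝒪(X) = A` be such that `V(f)` and `V(f,g)` are smooth of codimension 1 and 2
respectively (smoothness of a closed subvariety being smoothness of its coordinate
ring over `ℂ`, codimension being expressed by Krull dimensions). Then for every
`m ≥ 2` the affine variety `W = {(x,t) ∈ X × 𝔸¹ | t^m · g(x) = f(x)}`, with
coordinate ring `A[t]/(t^m·g − f)`, is smooth of the same dimension as `X`. -/
theorem stmt14 (A : Type) [CommRing A] [IsDomain A] [Algebra ℂ A]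
    [Algebra.FiniteType ℂ A] (hA : Algebra.Smooth ℂ A)
    (f g : A) (m : ℕ) (hm : 2 ≤ m)
    (hf_sm : Algebra.Smooth ℂ (A ⧸ Ideal.span {f}))
    (hf_dim : ringKrullDim (A ⧸ Ideal.span {f}) + 1 = ringKrullDim A)
    (hfg_sm : Algebra.Smooth ℂ (A ⧸ Ideal.span {f, g}))
    (hfg_dim : ringKrullDim (A ⧸ Ideal.span {f, g}) + 2 = ringKrullDim A) :
    Algebra.Smooth ℂ (Polynomial A ⧸ Ideal.span {(X : Polynomial A) ^ m * C g - C f}) ∧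
      ringKrullDim (Polynomial A ⧸ Ideal.span {(X : Polynomial A) ^ m * C g - C f}) =
        ringKrullDim A :=
  stmt14_general f g (Nat.cast_ne_zero.2 (by omega : m ≠ 0)) hf_dim hfg_dim
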